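/- arXiv:2006.13506 — 8 statements merged into one kernel-verified Lean document; each statement's English description precedes it below -/
import Mathlib

section
/- Let Λ ⊆ ℝ^q be a nonempty compact convex set, let μ > 0 and L₂₁ ≥ 0, and let F : ℝ^n × ℝ^q → ℝ be such that (i) for every θ ∈ ℝ^n the map α ↦ F(θ, α) is differentiable on ℝ^q and μ-strongly concave on Λ, and (ii) for all α ∈ Λ and all θ₁, θ₂ ∈ ℝ^n, ‖∇_α F(θ₁, α) − ∇_α F(θ₂, α)‖ ≤ L₂₁‖θ₁ − θ₂‖. Then for all θ₁, θ₂ ∈ ℝ^n and any points α₁, α₂ ∈ Λ such that α₁ maximizes F(θ₁, ·) over Λ and α₂ maximizes F(θ₂, ·) over Λ, one has ‖α₁ − α₂‖ ≤ (L₂₁/μ)‖θ₁ − θ₂‖. -/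
open RealInnerProductSpace

/-- Lipschitz continuity of the maximizer of a strongly concave
function whose gradient in `α` is Lipschitz in `θ`. -/
theorem stmt0 {n q : ℕ} (Λ : Set (EuclideanSpace ℝ (Fin q)))
    (hΛne : Λ.Nonempty) (hΛcompact : IsCompact Λ) (hΛconvex : Convex ℝ Λ)
    (μ L21 : ℝ) (hμ : 0 < μ) (hL21 : 0 ≤ L21)
    (F : EuclideanSpace ℝ (Fin n) → EuclideanSpace ℝ (Fin q) → ℝ)
    (hdiff : ∀ θ, Differentiable ℝ (F θ))
    (hconcave : ∀ θ, ∀ x ∈ Λ, ∀ y ∈ Λ,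
      F θ y ≤ F θ x + ⟪gradient (F θ) x, y - x⟫ - (μ / 2) * ‖y - x‖ ^ 2)
    (hlip : ∀ α ∈ Λ, ∀ θ₁ θ₂ : EuclideanSpace ℝ (Fin n),
      ‖gradient (F θ₁) α - gradient (F θ₂) α‖ ≤ L21 * ‖θ₁ - θ₂‖) :
    ∀ (θ₁ θ₂ : EuclideanSpace ℝ (Fin n)) (α₁ α₂ : EuclideanSpace ℝ (Fin q)),
      α₁ ∈ Λ → α₂ ∈ Λ →
      (∀ α ∈ Λ, F θ₁ α ≤ F θ₁ α₁) →
      (∀ α ∈ Λ, F θ₂ α ≤ F θ₂ α₂) →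
      ‖α₁ - α₂‖ ≤ (L21 / μ) * ‖θ₁ - θ₂‖ := by
  intro θ₁ θ₂ α₁ α₂ h1 h2 hm1 hm2
  have vi : ∀ θ, ∀ a ∈ Λ, (∀ α ∈ Λ, F θ α ≤ F θ a) → ∀ b ∈ Λ,
      ⟪gradient (F θ) a, b - a⟫ ≤ 0 := by
    intro θ a ha hm b hb
    have hmax : IsLocalMaxOn (F θ) Λ a := by
      have h : IsMaxOn (F θ) Λ a := fun x hx => hm x hx
      exact h.localize
    have hd := ((hdiff θ) a).hasGradientAt.hasFDerivAt.hasFDerivWithinAt (s := Λ)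
    have hseg := sub_mem_posTangentConeAt_of_segment_subset (hΛconvex.segment_subset ha hb)
    have h := hmax.hasFDerivWithinAt_nonpos hd hseg
    simpa using h
  have v1 := vi θ₁ α₁ h1 hm1 α₂ h2
  have v2 := vi θ₂ α₂ h2 hm2 α₁ h1
  have c1 := hconcave θ₁ α₁ h1 α₂ h2
  have c2 := hconcave θ₁ α₂ h2 α₁ h1
  have cs := real_inner_le_norm (gradient (F θ₁) α₂ - gradient (F θ₂) α₂) (α₁ - α₂)
  rw [inner_sub_left] at cs
  have hl := mul_le_mul_of_nonneg_right (hlip α₂ h2 θ₁ θ₂) (norm_nonneg (α₁ - α₂))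
  rw [norm_sub_rev α₂ α₁] at c1
  have key : (μ * ‖α₁ - α₂‖) * ‖α₁ - α₂‖ ≤ (L21 * ‖θ₁ - θ₂‖) * ‖α₁ - α₂‖ := by
    nlinarith
  rw [div_mul_eq_mul_div, le_div_iff₀ hμ, mul_comm]
  rcases (norm_nonneg (α₁ - α₂)).eq_or_lt with h0 | h0
  · rw [← h0, mul_zero]
    positivity
  · exact le_of_mul_le_mul_right key h0
end

section
/- Let Λ ⊆ ℝ^q be a nonempty compact convex set, μ > 0, and L₁₁, L₁₂, L₂₁ ≥ 0. Let F : ℝ^n × ℝ^q → ℝ be such that (i) for every θ the map α ↦ F(θ, α) is differentiable on ℝ^q and μ-strongly concave on Λ; (ii) for every α the map θ ↦ F(θ, α) is differentiable with gradient ∇_θ F(θ, α), and ‖∇_θ F(θ₁, α₁) − ∇_θ F(θ₂, α₂)‖ ≤ L₁₁‖θ₁ − θ₂‖ + L₁₂‖α₁ − α₂‖ for all θ₁, θ₂, α₁, α₂; (iii) ‖∇_α F(θ₁, α) − ∇_α F(θ₂, α)‖ ≤ L₂₁‖θ₁ − θ₂‖ for all θ₁, θ₂ and all α ∈ Λ.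 Then for every θ ∈ ℝ^n the function F(θ, ·) attains a unique maximizer α*(θ) over Λ, and the function g(θ) := sup_{α ∈ Λ} F(θ, α) is differentiable at every θ ∈ ℝ^n with gradient ∇g(θ) = ∇_θ F(θ, α*(θ)). -/
open RealInnerProductSpace

/-- Danskin-type theorem: the marginal maximum function
`g(θ) = sup_{α ∈ Λ} F(θ, α)` of a smooth nonconvex–strongly-concave saddle
function is differentiable with gradient `∇_θ F(θ, α*(θ))`, where `α*(θ)`
is the unique maximizer over `Λ`. -/
theorem stmt2 {n q : ℕ} (Λ : Set (EuclideanSpace ℝ (Fin q)))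
    (hΛne : Λ.Nonempty) (hΛcompact : IsCompact Λ) (hΛconvex : Convex ℝ Λ)
    (μ L11 L12 L21 : ℝ) (hμ : 0 < μ) (hL11 : 0 ≤ L11) (hL12 : 0 ≤ L12) (hL21 : 0 ≤ L21)
    (F : EuclideanSpace ℝ (Fin n) → EuclideanSpace ℝ (Fin q) → ℝ)
    (hdiffα : ∀ θ, Differentiable ℝ (F θ))
    (hconcave : ∀ θ, ∀ x ∈ Λ, ∀ y ∈ Λ,
      F θ y ≤ F θ x + ⟪gradient (F θ) x, y - x⟫ - (μ / 2) * ‖y - x‖ ^ 2)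
    (hdiffθ : ∀ α, Differentiable ℝ (fun θ => F θ α))
    (hlipθ : ∀ θ₁ θ₂ α₁ α₂,
      ‖gradient (fun θ => F θ α₁) θ₁ - gradient (fun θ => F θ α₂) θ₂‖ ≤
        L11 * ‖θ₁ - θ₂‖ + L12 * ‖α₁ - α₂‖)
    (hlipα : ∀ (θ₁ θ₂ : EuclideanSpace ℝ (Fin n)), ∀ α ∈ Λ,
      ‖gradient (F θ₁) α - gradient (F θ₂) α‖ ≤ L21 * ‖θ₁ - θ₂‖) :
    ∀ θ : EuclideanSpace ℝ (Fin n), ∃ αstar ∈ Λ,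
      (∀ α ∈ Λ, F θ α ≤ F θ αstar) ∧
      (∀ α' ∈ Λ, (∀ α ∈ Λ, F θ α ≤ F θ α') → α' = αstar) ∧
      HasGradientAt (fun θ' => sSup (F θ' '' Λ))
        (gradient (fun θ' => F θ' αstar) θ) θ := by
  have hex : ∀ θ, ∃ a ∈ Λ, ∀ α ∈ Λ, F θ α ≤ F θ a := fun θ =>
    hΛcompact.exists_isMaxOn hΛne (hdiffα θ).continuous.continuousOn
  choose A hAΛ hAmax using hex
  have hfo : ∀ θ, ∀ y ∈ Λ, ⟪gradient (F θ) (A θ), y - A θ⟫ ≤ 0 := by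
    intro θ y hy
    have hm : IsLocalMaxOn (F θ) Λ (A θ) := IsMaxOn.localize (hAmax θ)
    have hd := (hdiffα θ (A θ)).hasGradientAt.hasFDerivAt
    have := hm.hasFDerivWithinAt_nonpos hd.hasFDerivWithinAt
      (sub_mem_posTangentConeAt_of_segment_subset (hΛconvex.segment_subset (hAΛ θ) hy))
    simpa using this
  have hqg : ∀ θ, ∀ y ∈ Λ, F θ y ≤ F θ (A θ) - (μ / 2) * ‖y - A θ‖ ^ 2 := by
    intro θ y hy
    have h1 := hconcave θ (A θ) (hAΛ θ) y hy
    have h2 := hfo θ y hy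
    linarith
  have hstab : ∀ θ θ', ‖A θ' - A θ‖ ≤ L21 / μ * ‖θ' - θ‖ := by
    intro θ θ'
    have h1 := hconcave θ' (A θ) (hAΛ θ) (A θ') (hAΛ θ')
    have h2 := hqg θ' (A θ) (hAΛ θ)
    rw [norm_sub_rev] at h2
    have h3 := hfo θ (A θ') (hAΛ θ')
    have h4 := real_inner_le_norm (gradient (F θ') (A θ) - gradient (F θ) (A θ)) (A θ' - A θ)
    rw [inner_sub_left] at h4
    have h5 := mul_le_mul_of_nonneg_right (hlipα θ' θ (A θ) (hAΛ θ)) (norm_nonneg (A θ' - A θ))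
    have h6 : μ * ‖A θ' - A θ‖ ^ 2 ≤ L21 * ‖θ' - θ‖ * ‖A θ' - A θ‖ := by linarith
    rw [div_mul_eq_mul_div, le_div_iff₀ hμ]
    rcases (norm_nonneg (A θ' - A θ)).eq_or_lt with h0 | h0
    · rw [← h0]
      have := mul_nonneg hL21 (norm_nonneg (θ' - θ))
      linarith
    · refine le_of_mul_le_mul_right ?_ h0
      linarith
  have hkey : ∀ θ θ' a α, |F θ' α - F θ α - ⟪gradient (fun t => F t a) θ, θ' - θ⟫| ≤
      (L11 * ‖θ' - θ‖ + L12 * ‖α - a‖) * ‖θ' - θ‖ := by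
    intro θ θ' a α
    have := (convex_segment (𝕜 := ℝ) θ θ').norm_image_sub_le_of_norm_hasFDerivWithin_le'
      (f := fun t => F t α)
      (f' := fun t => InnerProductSpace.toDual ℝ _ (gradient (fun t => F t α) t))
      (φ := InnerProductSpace.toDual ℝ _ (gradient (fun t => F t a) θ))
      (C := L11 * ‖θ' - θ‖ + L12 * ‖α - a‖)
      (fun x _ => (hdiffθ α x).hasGradientAt.hasFDerivAt.hasFDerivWithinAt)
      (fun x hx => by
        rw [← map_sub, LinearIsometryEquiv.norm_map]
        have h1 := hlipθ x θ α a
        have h2 : ‖x - θ‖ ≤ ‖θ' - θ‖ := by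
          have := norm_sub_le_of_mem_segment hx
          simpa [norm_sub_rev] using this
        have h3 := mul_le_mul_of_nonneg_left h2 hL11
        linarith)
      (left_mem_segment ℝ θ θ') (right_mem_segment ℝ θ θ')
    simpa using this
  have hsup : ∀ θ, sSup (F θ '' Λ) = F θ (A θ) := by
    intro θ
    refine IsGreatest.csSup_eq ⟨⟨_, hAΛ θ, rfl⟩, ?_⟩
    rintro _ ⟨α, hα, rfl⟩
    exact hAmax θ α hα
  intro θ
  refine ⟨A θ, hAΛ θ, hAmax θ, ?_, ?_⟩
  · intro α' hα' hmax
    have h1 := hqg θ α' hα'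
    have h2 := hmax (A θ) (hAΛ θ)
    have h3 : ‖α' - A θ‖ ^ 2 ≤ 0 := by
      by_contra! h
      have := mul_pos (half_pos hμ) h
      linarith
    have h4 : ‖α' - A θ‖ = 0 := by
      have := sq_nonneg ‖α' - A θ‖
      exact pow_eq_zero_iff (two_ne_zero) |>.1 (le_antisymm h3 this)
    exact sub_eq_zero.1 (norm_eq_zero.1 h4)
  · simp only [hsup]
    rw [hasGradientAt_iff_isLittleO, Asymptotics.isLittleO_iff]
    intro c hc
    have hev : ∀ᶠ x in nhds θ, (L11 + L12 * (L21 / μ)) * ‖x - θ‖ < c := by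
      have hcont : Continuous fun x : EuclideanSpace ℝ (Fin n) =>
        (L11 + L12 * (L21 / μ)) * ‖x - θ‖ := by fun_prop
      exact hcont.continuousAt.eventually_lt_const (by simpa using hc)
    filter_upwards [hev] with x hx
    have hn := norm_nonneg (x - θ)
    have hxc := mul_le_mul_of_nonneg_right hx.le hn
    have hlow := (abs_le.1 (hkey θ x (A θ) (A θ))).1
    have hup := (abs_le.1 (hkey θ x (A θ) (A x))).2
    have hs := mul_le_mul_of_nonneg_right
      (mul_le_mul_of_nonneg_left (hstab θ x) hL12) hn
    have h1 := hAmax x (A θ) (hAΛ θ)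
    have h2 := hAmax θ (A x) (hAΛ x)
    have h3 : 0 ≤ L12 * (L21 / μ) * ‖x - θ‖ * ‖x - θ‖ := by positivity
    rw [sub_self, norm_zero] at hlow
    rw [Real.norm_eq_abs, abs_le]
    constructor <;> linarith
end

section
/- Let Λ ⊆ ℝ^q be a nonempty compact convex set, μ > 0, and L₁₁, L₁₂, L₂₁ ≥ 0. Let F : ℝ^n × ℝ^q → ℝ be such that (i) for every θ the map α ↦ F(θ, α) is differentiable on ℝ^q and μ-strongly concave on Λ; (ii) for every α the map θ ↦ F(θ, α) is differentiable with gradient ∇_θ F(θ, α), and ‖∇_θ F(θ₁, α₁) − ∇_θ F(θ₂, α₂)‖ ≤ L₁₁‖θ₁ − θ₂‖ + L₁₂‖α₁ − α₂‖ for all θ₁, θ₂, α₁, α₂; (iii) ‖∇_α F(θ₁, α) − ∇_α F(θ₂, α)‖ ≤ L₂₁‖θ₁ − θ₂‖ for all θ₁, θ₂ and all α ∈ Λ. For each θ let α*(θ) ∈ Λ be a maximizer of F(θ, ·) over Λ. Then the map θ ↦ ∇_θ F(θ, α*(θ)) is Lipschitz continuous with constant L₁₁ + L₁₂·L₂₁/μ,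 i.e., ‖∇_θ F(θ₁, α*(θ₁)) − ∇_θ F(θ₂, α*(θ₂))‖ ≤ (L₁₁ + L₁₂L₂₁/μ)‖θ₁ − θ₂‖ for all θ₁, θ₂ ∈ ℝ^n. -/
open RealInnerProductSpace

/-- the map `θ ↦ ∇_θ F(θ, α*(θ))` is Lipschitz with constant
`L₁₁ + L₁₂ L₂₁ / μ`, where `α*(θ)` is a maximizer of the `μ`-strongly concave
function `F(θ, ·)` over `Λ`. -/
theorem stmt3 {n q : ℕ} (Λ : Set (EuclideanSpace ℝ (Fin q)))
    (hΛne : Λ.Nonempty) (hΛcompact : IsCompact Λ) (hΛconvex : Convex ℝ Λ)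
    (μ L11 L12 L21 : ℝ) (hμ : 0 < μ) (hL11 : 0 ≤ L11) (hL12 : 0 ≤ L12) (hL21 : 0 ≤ L21)
    (F : EuclideanSpace ℝ (Fin n) → EuclideanSpace ℝ (Fin q) → ℝ)
    (hdiffα : ∀ θ, Differentiable ℝ (F θ))
    (hconcave : ∀ θ, ∀ x ∈ Λ, ∀ y ∈ Λ,
      F θ y ≤ F θ x + ⟪gradient (F θ) x, y - x⟫ - (μ / 2) * ‖y - x‖ ^ 2)
    (hdiffθ : ∀ α, Differentiable ℝ (fun θ => F θ α))
    (hlipθ : ∀ θ₁ θ₂ α₁ α₂,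
      ‖gradient (fun θ => F θ α₁) θ₁ - gradient (fun θ => F θ α₂) θ₂‖ ≤
        L11 * ‖θ₁ - θ₂‖ + L12 * ‖α₁ - α₂‖)
    (hlipα : ∀ (θ₁ θ₂ : EuclideanSpace ℝ (Fin n)), ∀ α ∈ Λ,
      ‖gradient (F θ₁) α - gradient (F θ₂) α‖ ≤ L21 * ‖θ₁ - θ₂‖)
    (αstar : EuclideanSpace ℝ (Fin n) → EuclideanSpace ℝ (Fin q))
    (hαstar_mem : ∀ θ, αstar θ ∈ Λ)
    (hαstar_max : ∀ θ, ∀ α ∈ Λ, F θ α ≤ F θ (αstar θ)) :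
    ∀ θ₁ θ₂ : EuclideanSpace ℝ (Fin n),
      ‖gradient (fun θ => F θ (αstar θ₁)) θ₁ - gradient (fun θ => F θ (αstar θ₂)) θ₂‖ ≤
        (L11 + L12 * L21 / μ) * ‖θ₁ - θ₂‖ := by
  have opt : ∀ θ, ∀ y ∈ Λ, ⟪gradient (F θ) (αstar θ), y - αstar θ⟫ ≤ 0 := by
    intro θ y hy
    have hmax : IsLocalMaxOn (F θ) Λ (αstar θ) :=
      IsMaxOn.localize (fun z hz => hαstar_max θ z hz)
    have hg := ((hdiffα θ (αstar θ)).hasGradientAt.hasFDerivAt).hasFDerivWithinAt (s := Λ)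
    have := hmax.hasFDerivWithinAt_nonpos hg
      (sub_mem_posTangentConeAt_of_segment_subset
        (hΛconvex.segment_subset (hαstar_mem θ) hy))
    simpa using this
  intro θ₁ θ₂
  have key : ‖αstar θ₁ - αstar θ₂‖ ≤ L21 / μ * ‖θ₁ - θ₂‖ := by
    have ha := hαstar_mem θ₁
    have hb := hαstar_mem θ₂
    have h1 := opt θ₁ _ hb
    have h2 := opt θ₂ _ ha
    have h3 := hconcave θ₁ _ ha _ hb
    have h4 := hconcave θ₁ _ hb _ ha
    have h5 := hlipα θ₁ θ₂ _ hb
    generalize αstar θ₁ = a at *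
    generalize αstar θ₂ = b at *
    have h6 := real_inner_le_norm (gradient (F θ₁) b - gradient (F θ₂) b) (a - b)
    rw [inner_sub_left] at h6
    rw [norm_sub_rev b a] at h3
    have h7 := mul_le_mul_of_nonneg_right h5 (norm_nonneg (a - b))
    have h8 : μ * ‖a - b‖ ^ 2 ≤ L21 * ‖θ₁ - θ₂‖ * ‖a - b‖ := by linarith
    rw [div_mul_eq_mul_div, le_div_iff₀ hμ]
    rcases (norm_nonneg (a - b)).eq_or_lt with h | h
    · rw [← h]; simp; positivity
    · refine le_of_mul_le_mul_right ?_ h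
      linarith
  calc _ ≤ _ := hlipθ θ₁ θ₂ (αstar θ₁) (αstar θ₂)
    _ ≤ L11 * ‖θ₁ - θ₂‖ + L12 * (L21 / μ * ‖θ₁ - θ₂‖) := by gcongr
    _ = _ := by ring
end

section
/- Let Θ ⊆ ℝ^n and Λ ⊆ ℝ^q be nonempty compact sets, and let F : ℝ^n × ℝ^q → ℝ be continuous and, for each α, differentiable in θ with gradient ∇_θ F(θ, α). Define g(θ) := sup_{α ∈ Λ} F(θ, α). Suppose there is C > 0 such that for every α ∈ Λ and every θ ∈ Θ: F(θ, α) − inf_{θ' ∈ Θ} F(θ', α) ≤ C · sup_{θ̄ ∈ Θ} ⟨θ − θ̄, ∇_θ F(θ, α)⟩. Then for every θ ∈ Θ and every α̂ ∈ Λ maximizing F(θ, ·) over Λ: g(θ) − inf_{θ' ∈ Θ} g(θ') ≤ C · sup_{θ̄ ∈ Θ} ⟨θ − θ̄, ∇_θ F(θ, α̂)⟩. -/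
open RealInnerProductSpace

/-- the gradient dominance property transfers from `F(·, α)`
(uniformly in `α ∈ Λ`) to the pointwise maximum `g(θ) = sup_{α ∈ Λ} F(θ, α)`,
when evaluated at the maximizer `α̂` of `F(θ, ·)`. -/
theorem stmt4 {n q : ℕ}
    (Θ : Set (EuclideanSpace ℝ (Fin n))) (Λ : Set (EuclideanSpace ℝ (Fin q)))
    (hΘne : Θ.Nonempty) (hΘcompact : IsCompact Θ)
    (hΛne : Λ.Nonempty) (hΛcompact : IsCompact Λ)
    (F : EuclideanSpace ℝ (Fin n) → EuclideanSpace ℝ (Fin q) → ℝ)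
    (hcont : Continuous (fun p : EuclideanSpace ℝ (Fin n) × EuclideanSpace ℝ (Fin q) =>
      F p.1 p.2))
    (hdiffθ : ∀ α, Differentiable ℝ (fun θ => F θ α))
    (C : ℝ) (hC : 0 < C)
    (hgd : ∀ α ∈ Λ, ∀ θ ∈ Θ,
      F θ α - sInf ((fun θ' => F θ' α) '' Θ) ≤
        C * sSup ((fun θbar => ⟪θ - θbar, gradient (fun θ' => F θ' α) θ⟫) '' Θ)) :
    ∀ θ ∈ Θ, ∀ αhat ∈ Λ, (∀ α ∈ Λ, F θ α ≤ F θ αhat) →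
      sSup (F θ '' Λ) - sInf ((fun θ' => sSup (F θ' '' Λ)) '' Θ) ≤
        C * sSup ((fun θbar => ⟪θ - θbar, gradient (fun θ' => F θ' αhat) θ⟫) '' Θ) := by
  intro θ hθ αhat hα hmax
  refine le_trans ?_ (hgd αhat hα θ hθ)
  have h1 : sSup (F θ '' Λ) ≤ F θ αhat := by
    apply csSup_le (hΛne.image _)
    rintro _ ⟨α, h, rfl⟩
    exact hmax α h
  have h2 : sInf ((fun θ' => F θ' αhat) '' Θ) ≤
      sInf ((fun θ' => sSup (F θ' '' Λ)) '' Θ) := by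
    apply le_csInf (hΘne.image _)
    rintro _ ⟨θ', h, rfl⟩
    have hc1 : Continuous (fun t => F t αhat) :=
      hcont.comp (Continuous.prodMk_left αhat)
    have hc2 : Continuous (F θ') :=
      hcont.comp (Continuous.prodMk_right θ')
    refine le_trans (csInf_le (hΘcompact.image hc1).bddBelow ⟨θ', h, rfl⟩) ?_
    exact le_csSup (hΛcompact.image hc2).bddAbove ⟨αhat, hα, rfl⟩
  linarith
end

section
/- Let Λ ⊆ ℝ^q be a nonempty closed convex set, let μ > 0 and L ≥ μ, and let f : ℝ^q → ℝ be differentiable on ℝ^q, μ-strongly concave on Λ, and with ‖∇f(x) − ∇f(y)‖ ≤ L‖x − y‖ for all x, y ∈ Λ. Let α* ∈ Λ be a maximizer of f over Λ. Set β = μ/(4L²). Let α ∈ Λ, v ∈ ℝ^q, and let α⁺ ∈ Λ be the metric projection of α + βv onto Λ. Then ‖α⁺ − α*‖² ≤ (1 − μ²/(8L²))‖α − α*‖² + (3/(8L²))‖v − ∇f(α)‖². -/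
open RealInnerProductSpace

/-- one-step contraction of an inexact projected gradient ascent
step on a `μ`-strongly concave function with `L`-Lipschitz gradient,
with stepsize `β = μ/(4L²)`. -/
theorem stmt5 {q : ℕ} (Λ : Set (EuclideanSpace ℝ (Fin q)))
    (hΛne : Λ.Nonempty) (hΛclosed : IsClosed Λ) (hΛconvex : Convex ℝ Λ)
    (μ L : ℝ) (hμ : 0 < μ) (hL : μ ≤ L)
    (f : EuclideanSpace ℝ (Fin q) → ℝ)
    (hdiff : Differentiable ℝ f)
    (hconcave : ∀ x ∈ Λ, ∀ y ∈ Λ,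
      f y ≤ f x + ⟪gradient f x, y - x⟫ - (μ / 2) * ‖y - x‖ ^ 2)
    (hlip : ∀ x ∈ Λ, ∀ y ∈ Λ, ‖gradient f x - gradient f y‖ ≤ L * ‖x - y‖)
    (αstar : EuclideanSpace ℝ (Fin q)) (hαstar : αstar ∈ Λ)
    (hmax : ∀ α ∈ Λ, f α ≤ f αstar)
    (β : ℝ) (hβ : β = μ / (4 * L ^ 2))
    (α : EuclideanSpace ℝ (Fin q)) (hα : α ∈ Λ)
    (v : EuclideanSpace ℝ (Fin q))
    (αplus : EuclideanSpace ℝ (Fin q)) (hαplus : αplus ∈ Λ)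
    (hproj : ∀ y ∈ Λ, ⟪(α + β • v) - αplus, y - αplus⟫ ≤ 0) :
    ‖αplus - αstar‖ ^ 2 ≤
      (1 - μ ^ 2 / (8 * L ^ 2)) * ‖α - αstar‖ ^ 2 +
        (3 / (8 * L ^ 2)) * ‖v - gradient f α‖ ^ 2 := by
  have hL0 : 0 < L := lt_of_lt_of_le hμ hL
  -- first-order optimality at the maximizer
  have hopt : ⟪gradient f αstar, αplus - αstar⟫ ≤ 0 := by
    have h1 : IsLocalMaxOn f Λ αstar := IsMaxOn.localize hmax
    have h2 := h1.hasFDerivWithinAt_nonpos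
      ((hdiff αstar).hasGradientAt.hasFDerivAt.hasFDerivWithinAt)
      (sub_mem_posTangentConeAt_of_segment_subset
        (hΛconvex.segment_subset hαstar hαplus))
    simpa using h2
  have hc1 := hconcave α hα αstar hαstar
  have hc2 := hconcave αstar hαstar α hα
  have hl := hlip α hα αstar hαstar
  have hp := hproj αstar hαstar
  obtain ⟨d, hd⟩ : ∃ d, d = α - αstar := ⟨_, rfl⟩
  obtain ⟨p, hpd⟩ : ∃ p, p = αplus - αstar := ⟨_, rfl⟩
  obtain ⟨e, he⟩ : ∃ e, e = v - gradient f α := ⟨_, rfl⟩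
  obtain ⟨h, hh⟩ : ∃ h, h = gradient f α - gradient f αstar := ⟨_, rfl⟩
  obtain ⟨x, hx⟩ : ∃ x, x = d + β • h := ⟨_, rfl⟩
  have hβ0 : 0 < β := by rw [hβ]; positivity
  have e1 : αstar - α = -d := by rw [hd]; abel
  have e2 : αstar - αplus = -p := by rw [hpd]; abel
  have e3 : α + β • v - αplus = x + β • e + β • gradient f αstar - p := by
    rw [hx, he, hh, hpd, hd]; module
  rw [e3, e2] at hp
  rw [e1] at hc1
  rw [← hd] at hc2 hl
  rw [← hh] at hl
  rw [← hpd] at hopt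
  rw [← hpd, ← hd, ← he]
  have hmono : ⟪d, h⟫ ≤ -μ * ‖d‖ ^ 2 := by
    rw [hh, inner_sub_right, real_inner_comm, real_inner_comm (gradient f αstar)]
    rw [inner_neg_right, norm_neg] at hc1
    linarith
  have hpw : ‖p‖ ^ 2 ≤ ⟪x + β • e, p⟫ := by
    rw [inner_neg_right, inner_sub_left, inner_add_left (x + β • e),
      real_inner_self_eq_norm_sq, real_inner_smul_left] at hp
    linarith [mul_nonneg hβ0.le (neg_nonneg.2 hopt)]
  have hpn : ‖p‖ ^ 2 ≤ ‖x + β • e‖ ^ 2 := by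
    have := norm_sub_sq_real (x + β • e) p
    linarith [sq_nonneg ‖x + β • e - p‖]
  have hl2 : ‖h‖ ^ 2 ≤ L ^ 2 * ‖d‖ ^ 2 := by
    rw [← mul_pow]; exact pow_le_pow_left₀ (norm_nonneg _) hl 2
  obtain ⟨m, hm⟩ : ∃ m, m = μ / L := ⟨_, rfl⟩
  obtain ⟨s, hs⟩ : ∃ s, s = ‖e‖ / L := ⟨_, rfl⟩
  have hm0 : 0 < m := by rw [hm]; positivity
  have hm1 : m ≤ 1 := by rw [hm]; exact (div_le_one hL0).2 hL
  have hbm : β * μ = m ^ 2 / 4 := by rw [hβ, hm]; field_simp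
  have hbL : β ^ 2 * L ^ 2 = m ^ 2 / 16 := by rw [hβ, hm]; field_simp; norm_num
  have hxn : ‖x‖ ^ 2 ≤ (1 - 7 / 16 * m ^ 2) * ‖d‖ ^ 2 := by
    rw [hx, norm_add_sq_real, real_inner_smul_right, norm_smul, mul_pow, Real.norm_eq_abs,
      sq_abs]
    have a1 := mul_le_mul_of_nonneg_left hmono hβ0.le
    have a2 := mul_le_mul_of_nonneg_left hl2 (sq_nonneg β)
    have a3 : β * (-μ * ‖d‖ ^ 2) = -(m ^ 2 / 4) * ‖d‖ ^ 2 := by rw [← hbm]; ring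
    have a4 : β ^ 2 * (L ^ 2 * ‖d‖ ^ 2) = m ^ 2 / 16 * ‖d‖ ^ 2 := by rw [← hbL]; ring
    linarith
  have hen : ‖β • e‖ = m * s / 4 := by
    rw [norm_smul, Real.norm_eq_abs, abs_of_pos hβ0, hβ, hm, hs]; field_simp
  have hw : ‖x + β • e‖ ^ 2 ≤ (1 + 5 / 16 * m ^ 2) * ‖x‖ ^ 2 + (m ^ 2 / 16 + 1 / 5) * s ^ 2 := by
    rw [norm_add_sq_real, hen]
    have b1 := real_inner_le_norm x (β • e)
    rw [hen] at b1
    linarith [sq_nonneg (5 * (m * ‖x‖) - 4 * s)]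
  have hm2 : m ^ 2 ≤ 1 := pow_le_one₀ hm0.le hm1
  have t1 : (1 + 5 / 16 * m ^ 2) * ‖x‖ ^ 2 ≤ (1 - m ^ 2 / 8) * ‖d‖ ^ 2 := by
    have c1 := mul_le_mul_of_nonneg_left hxn (by positivity : 0 ≤ 1 + 5 / 16 * m ^ 2)
    linarith [mul_nonneg (sq_nonneg (m ^ 2)) (sq_nonneg ‖d‖)]
  have t2 : (m ^ 2 / 16 + 1 / 5) * s ^ 2 ≤ 3 / 8 * s ^ 2 :=
    mul_le_mul_of_nonneg_right (by linarith) (sq_nonneg s)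
  have f1 : μ ^ 2 / (8 * L ^ 2) = m ^ 2 / 8 := by rw [hm]; field_simp
  have f2 : 3 / (8 * L ^ 2) * ‖e‖ ^ 2 = 3 / 8 * s ^ 2 := by rw [hs]; field_simp
  rw [f1, f2]
  linarith
end

section
/- Let Θ ⊆ ℝ^n be a nonempty compact convex set with ‖u‖ ≤ R for all u ∈ Θ, and let g : ℝ^n → ℝ be differentiable with L-Lipschitz gradient (L ≥ 0). Let θ ∈ Θ, d ∈ ℝ^n, η ∈ (0, 1], let v̂ ∈ Θ satisfy ⟨d, v̂⟩ ≤ ⟨d, u⟩ for all u ∈ Θ, and set θ⁺ = θ + η(v̂ − θ). Then for every u ∈ Θ: ⟨∇g(θ), θ − u⟩ ≤ (g(θ) − g(θ⁺))/η + 2LηR² + 4R‖d − ∇g(θ)‖. -/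
open RealInnerProductSpace

theorem descent_aux {n : ℕ} (g : EuclideanSpace ℝ (Fin n) → ℝ)
    (hdiff : Differentiable ℝ g) (L : ℝ)
    (hlip : ∀ x y, ‖gradient g x - gradient g y‖ ≤ L * ‖x - y‖)
    (x w : EuclideanSpace ℝ (Fin n)) (t : ℝ) (ht : 0 ≤ t) :
    g (x + t • w) ≤ g x + t * ⟪gradient g x, w⟫ + L / 2 * t ^ 2 * ‖w‖ ^ 2 := by
  have hd : ∀ s : ℝ, HasDerivAt
      (fun s : ℝ => g (x + s • w) - s * ⟪gradient g x, w⟫ - L / 2 * s ^ 2 * ‖w‖ ^ 2)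
      (⟪gradient g (x + s • w), w⟫ - ⟪gradient g x, w⟫ - L * s * ‖w‖ ^ 2) s := by
    intro s
    have h1 : HasDerivAt (fun s : ℝ => x + s • w) w s := by
      simpa using ((hasDerivAt_id s).smul_const w).const_add x
    have h2 := (hdiff (x + s • w)).hasGradientAt.hasFDerivAt.comp_hasDerivAt s h1
    have h3 := (hasDerivAt_id s).mul_const ⟪gradient g x, w⟫
    have h4 := ((hasDerivAt_pow 2 s).const_mul (L / 2)).mul_const (‖w‖ ^ 2)
    refine HasDerivAt.congr_deriv ((h2.sub h3).sub h4) ?_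
    simp
    left
    ring
  have hanti := antitoneOn_of_deriv_nonpos (convex_Ici (0 : ℝ))
    (fun s _ => (hd s).continuousAt.continuousWithinAt)
    (fun s _ => (hd s).differentiableAt.differentiableWithinAt)
    (by
      intro s hs
      rw [interior_Ici] at hs
      have hs0 : 0 < s := hs
      rw [(hd s).deriv, ← inner_sub_left]
      have h1 := real_inner_le_norm (gradient g (x + s • w) - gradient g x) w
      have h2 := hlip (x + s • w) x
      rw [add_sub_cancel_left, norm_smul, Real.norm_of_nonneg hs0.le] at h2
      have h3 := mul_le_mul_of_nonneg_right h2 (norm_nonneg w)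
      nlinarith)
  have h := hanti (Set.mem_Ici.2 le_rfl) (Set.mem_Ici.2 ht) ht
  simp at h ⊢
  linarith

/-- one-step gap bound for the Frank–Wolfe method with an
inexact gradient direction `d`. -/
theorem stmt8 {n : ℕ} (Θ : Set (EuclideanSpace ℝ (Fin n)))
    (hΘne : Θ.Nonempty) (hΘcompact : IsCompact Θ) (hΘconvex : Convex ℝ Θ)
    (R : ℝ) (hR : ∀ u ∈ Θ, ‖u‖ ≤ R)
    (g : EuclideanSpace ℝ (Fin n) → ℝ)
    (hdiff : Differentiable ℝ g)
    (L : ℝ) (hL : 0 ≤ L)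
    (hlip : ∀ x y, ‖gradient g x - gradient g y‖ ≤ L * ‖x - y‖)
    (θ : EuclideanSpace ℝ (Fin n)) (hθ : θ ∈ Θ)
    (d : EuclideanSpace ℝ (Fin n))
    (η : ℝ) (hη0 : 0 < η) (hη1 : η ≤ 1)
    (vhat : EuclideanSpace ℝ (Fin n)) (hvhat : vhat ∈ Θ)
    (hvmin : ∀ u ∈ Θ, ⟪d, vhat⟫ ≤ ⟪d, u⟫)
    (θplus : EuclideanSpace ℝ (Fin n)) (hθplus : θplus = θ + η • (vhat - θ)) :
    ∀ u ∈ Θ,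
      ⟪gradient g θ, θ - u⟫ ≤
        (g θ - g θplus) / η + 2 * L * η * R ^ 2 + 4 * R * ‖d - gradient g θ‖ := by
  intro u hu
  have hdist : ∀ a ∈ Θ, ∀ b ∈ Θ, ‖a - b‖ ≤ 2 * R := fun a ha b hb => by
    linarith [norm_sub_le a b, hR a ha, hR b hb]
  have hD := descent_aux g hdiff L hlip θ (vhat - θ) η hη0.le
  rw [← hθplus] at hD
  have hw : ‖vhat - θ‖ ^ 2 ≤ (2 * R) ^ 2 :=
    pow_le_pow_left₀ (norm_nonneg _) (hdist _ hvhat _ hθ) 2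
  have hw2 := mul_le_mul_of_nonneg_left hw (by positivity : 0 ≤ L / 2 * η ^ 2)
  have key : -⟪gradient g θ, vhat - θ⟫ - 2 * L * η * R ^ 2 ≤ (g θ - g θplus) / η := by
    rw [le_div_iff₀ hη0]
    nlinarith
  have e1 : ⟪d - gradient g θ, u - vhat⟫ ≤ ‖d - gradient g θ‖ * (2 * R) :=
    (real_inner_le_norm _ _).trans
      (mul_le_mul_of_nonneg_left (hdist _ hu _ hvhat) (norm_nonneg _))
  have hpos : 0 ≤ R := (norm_nonneg _).trans (hR u hu)
  have hpos2 : 0 ≤ R * ‖d - gradient g θ‖ := by positivity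
  have h5 := hvmin u hu
  simp only [inner_sub_left, inner_sub_right] at *
  linarith
end

section
/- Let Θ ⊆ ℝ^n be a nonempty closed convex set with ‖u‖ ≤ R for all u ∈ Θ, and let g : ℝ^n → ℝ be differentiable. Let θ ∈ Θ, G ≥ ‖∇g(θ)‖, η > 0, d ∈ ℝ^n, and let θ⁺ ∈ Θ be the metric projection of θ − ηd onto Θ. Then for every u ∈ Θ: ⟨∇g(θ), θ − u⟩ ≤ (2R/η + G)·‖θ − θ⁺‖ + 2R·‖d − ∇g(θ)‖. -/
open RealInnerProductSpace

/-- the Frank–Wolfe-type gap of `g` at `θ` is bounded via one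
inexact projected-gradient step with stepsize `η` and gradient estimate `d`. -/
theorem stmt9 {n : ℕ} (Θ : Set (EuclideanSpace ℝ (Fin n)))
    (hΘne : Θ.Nonempty) (hΘclosed : IsClosed Θ) (hΘconvex : Convex ℝ Θ)
    (R : ℝ) (hR : ∀ u ∈ Θ, ‖u‖ ≤ R)
    (g : EuclideanSpace ℝ (Fin n) → ℝ)
    (hdiff : Differentiable ℝ g)
    (θ : EuclideanSpace ℝ (Fin n)) (hθ : θ ∈ Θ)
    (G : ℝ) (hG : ‖gradient g θ‖ ≤ G)
    (η : ℝ) (hη : 0 < η)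
    (d : EuclideanSpace ℝ (Fin n))
    (θplus : EuclideanSpace ℝ (Fin n)) (hθplus : θplus ∈ Θ)
    (hproj : ∀ y ∈ Θ, ⟪(θ - η • d) - θplus, y - θplus⟫ ≤ 0) :
    ∀ u ∈ Θ,
      ⟪gradient g θ, θ - u⟫ ≤
        (2 * R / η + G) * ‖θ - θplus‖ + 2 * R * ‖d - gradient g θ‖ := by
  intro u hu
  have hp := hproj u hu
  generalize gradient g θ = v at *
  have hD : ‖θplus - u‖ ≤ 2 * R := by
    have := norm_sub_le θplus u
    have := hR u hu
    have := hR θplus hθplus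
    linarith
  have h1 : ⟪v, θ - θplus⟫ ≤ G * ‖θ - θplus‖ :=
    (real_inner_le_norm _ _).trans (mul_le_mul_of_nonneg_right hG (norm_nonneg _))
  have h2 : ⟪v - d, θplus - u⟫ ≤ 2 * R * ‖d - v‖ := by
    refine (real_inner_le_norm _ _).trans ?_
    rw [norm_sub_rev v d, mul_comm]
    exact mul_le_mul_of_nonneg_right hD (norm_nonneg _)
  have h3 : ⟪θ - θplus, θplus - u⟫ ≤ 2 * R * ‖θ - θplus‖ := by
    refine (real_inner_le_norm _ _).trans ?_
    rw [mul_comm]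
    exact mul_le_mul_of_nonneg_right hD (norm_nonneg _)
  have h4 : η * ⟪d, θplus - u⟫ ≤ ⟪θ - θplus, θplus - u⟫ := by
    simp only [inner_sub_left, inner_sub_right, real_inner_smul_left] at hp ⊢
    linarith
  have h5 : ⟪d, θplus - u⟫ ≤ 2 * R / η * ‖θ - θplus‖ := by
    rw [div_mul_eq_mul_div, le_div_iff₀ hη]
    linarith
  have h6 : ⟪v, θ - u⟫ = ⟪v, θ - θplus⟫ + ⟪v - d, θplus - u⟫ + ⟪d, θplus - u⟫ := by
    simp only [inner_sub_left, inner_sub_right]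
    ring
  rw [h6]
  linarith
end

section
/- Let n ≥ 1 and let Δ_n = {p ∈ ℝ^n : p_i ≥ 0 for all i, Σ_i p_i = 1}. Let η > 0, q ∈ ℝ^n, and p₀ ∈ Δ_n with p₀,ᵢ > 0 for all i. Let p⁺ ∈ Δ_n be a minimizer over Δ_n of π ↦ ⟨q, π⟩ + (1/η)·KL(π‖p₀), and assume p⁺ᵢ > 0 for all i. Then for every p* ∈ Δ_n: 0 ≤ η·⟨q, p* − p₀⟩ + (η²/2)·(max_i |q_i|)² + KL(p*‖p₀) − KL(p*‖p⁺). -/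
/-- Kullback–Leibler divergence between finitely supported probability
vectors, with the convention `0 · log 0 = 0` (note `Real.log 0 = 0`). -/
noncomputable def KLdiv {n : ℕ} (p q : Fin n → ℝ) : ℝ :=
  ∑ i, p i * Real.log (p i / q i)

lemma hoeff_aux {n : ℕ} (w x : Fin n → ℝ) (hw : w ∈ stdSimplex ℝ (Fin n)) (M : ℝ)
    (hx : ∀ i, |x i| ≤ M) :
    ∑ i, w i * Real.exp (x i) ≤ Real.exp (∑ i, w i * x i + M ^ 2 / 2) := by
  obtain ⟨h0, h1⟩ := hw
  have hsum : ∑ i, ENNReal.ofReal (w i) = 1 := by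
    rw [← ENNReal.ofReal_sum_of_nonneg (fun i _ => h0 i), h1, ENNReal.ofReal_one]
  let P : PMF (Fin n) := PMF.ofFintype (fun i => ENNReal.ofReal (w i)) hsum
  have hint : ∀ f : Fin n → ℝ, ∫ i, f i ∂P.toMeasure = ∑ i, w i * f i := by
    intro f
    rw [PMF.integral_eq_sum]
    simp [P, PMF.ofFintype_apply, h0]
  have hb : ∀ᵐ i ∂P.toMeasure, x i ∈ Set.Icc (-M) M :=
    Filter.Eventually.of_forall fun i => abs_le.mp (hx i)
  have hH := (ProbabilityTheory.hasSubgaussianMGF_of_mem_Icc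
    (measurable_of_finite x).aemeasurable hb).mgf_le 1
  rw [ProbabilityTheory.mgf, hint, hint] at hH
  have e : ((((‖M - -M‖₊ / 2) ^ 2 : NNReal)) : ℝ) = M ^ 2 := by
    push_cast
    rw [Real.norm_eq_abs, div_pow, sq_abs]; ring
  rw [e] at hH
  set m := ∑ i, w i * x i with hm
  have : ∑ i, w i * Real.exp (x i) = Real.exp m * ∑ i, w i * Real.exp (1 * (x i - m)) := by
    rw [Finset.mul_sum]
    refine Finset.sum_congr rfl fun i _ => ?_
    rw [mul_left_comm, ← Real.exp_add]; congr 2; ring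
  rw [this, Real.exp_add]
  refine mul_le_mul_of_nonneg_left (hH.trans_eq ?_) (Real.exp_pos _).le
  congr 1; ring

lemma gibbs_term {a b : ℝ} (ha : 0 < a) (hb : 0 < b) :
    0 ≤ a * Real.log (a / b) - a + b ∧ (a * Real.log (a / b) - a + b = 0 → a = b) := by
  have hba : 0 < b / a := div_pos hb ha
  have hl : Real.log (a / b) = - Real.log (b / a) := by rw [← Real.log_inv, inv_div]
  have hab : a * (b / a) = b := by field_simp
  constructor
  · have := mul_le_mul_of_nonneg_left (Real.log_le_sub_one_of_pos hba) ha.le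
    rw [hl]; nlinarith
  · intro h
    by_contra hne
    have h1 : b / a ≠ 1 := fun h => hne ((div_eq_one_iff_eq ha.ne').mp h).symm
    have := mul_lt_mul_of_pos_left (Real.log_lt_sub_one_of_pos hba h1) ha
    rw [hl] at h; nlinarith

theorem stmt11 {n : ℕ} (hn : 1 ≤ n)
    (η : ℝ) (hη : 0 < η) (qv : Fin n → ℝ)
    (p₀ : Fin n → ℝ) (hp₀ : p₀ ∈ stdSimplex ℝ (Fin n)) (hp₀pos : ∀ i, 0 < p₀ i)
    (pplus : Fin n → ℝ) (hpplus : pplus ∈ stdSimplex ℝ (Fin n))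
    (hpplus_min : ∀ π ∈ stdSimplex ℝ (Fin n),
      (∑ i, qv i * pplus i) + (1 / η) * KLdiv pplus p₀ ≤
        (∑ i, qv i * π i) + (1 / η) * KLdiv π p₀)
    (hpplus_pos : ∀ i, 0 < pplus i) :
    ∀ ps ∈ stdSimplex ℝ (Fin n),
      0 ≤ η * (∑ i, qv i * (ps i - p₀ i)) + (η ^ 2 / 2) * (⨆ i, |qv i|) ^ 2 +
          KLdiv ps p₀ - KLdiv ps pplus := by
  intro ps hps
  haveI : Nonempty (Fin n) := ⟨⟨0, hn⟩⟩
  set M := ⨆ i, |qv i| with hM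
  have hqM : ∀ i, |qv i| ≤ M := fun i => le_ciSup (f := fun i => |qv i|) (Set.finite_range _).bddAbove i
  set Z := ∑ i, p₀ i * Real.exp (-η * qv i) with hZ
  have hZpos : 0 < Z := Finset.sum_pos
    (fun i _ => mul_pos (hp₀pos i) (Real.exp_pos _)) Finset.univ_nonempty
  have hlogZ : Real.log Z ≤ -η * ∑ i, qv i * p₀ i + η ^ 2 / 2 * M ^ 2 := by
    have h := hoeff_aux p₀ (fun i => -η * qv i) hp₀ (η * M) (fun i => by
      rw [abs_mul, abs_neg, abs_of_pos hη]
      exact mul_le_mul_of_nonneg_left (hqM i) hη.le)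
    have h2 := (Real.log_le_iff_le_exp hZpos).mpr h
    refine h2.trans_eq ?_
    rw [Finset.mul_sum]
    congr 1
    · exact Finset.sum_congr rfl fun i _ => by ring
    · ring
  let r : Fin n → ℝ := fun i => p₀ i * Real.exp (-η * qv i) / Z
  have hrpos : ∀ i, 0 < r i := fun i => div_pos (mul_pos (hp₀pos i) (Real.exp_pos _)) hZpos
  have hr : r ∈ stdSimplex ℝ (Fin n) := by
    refine ⟨fun i => (hrpos i).le, ?_⟩
    simp only [r]
    rw [← Finset.sum_div, ← hZ, div_self hZpos.ne']
  have hlogr : ∀ i, Real.log (r i) = Real.log (p₀ i) - η * qv i - Real.log Z := by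
    intro i
    simp only [r]
    rw [Real.log_div (mul_pos (hp₀pos i) (Real.exp_pos _)).ne' hZpos.ne',
      Real.log_mul (hp₀pos i).ne' (Real.exp_pos _).ne', Real.log_exp]
    ring
  have key : ∀ π ∈ stdSimplex ℝ (Fin n),
      KLdiv π p₀ - KLdiv π r = - (η * ∑ i, qv i * π i) - Real.log Z := by
    intro π hπ
    have hz : Real.log Z = ∑ i, π i * Real.log Z := by rw [← Finset.sum_mul, hπ.2, one_mul]
    rw [hz, KLdiv, KLdiv, Finset.mul_sum, ← Finset.sum_neg_distrib, ← Finset.sum_sub_distrib,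
      ← Finset.sum_sub_distrib]
    refine Finset.sum_congr rfl fun i _ => ?_
    rcases (hπ.1 i).eq_or_lt with h | h
    · simp [← h]
    · rw [Real.log_div h.ne' (hp₀pos i).ne', Real.log_div h.ne' (hrpos i).ne', hlogr]
      ring
  have hrr : KLdiv r r = 0 := by
    rw [KLdiv]
    exact Finset.sum_eq_zero fun i _ => by rw [div_self (hrpos i).ne']; simp
  have hle : KLdiv pplus r ≤ 0 := by
    have h := mul_le_mul_of_nonneg_left (hpplus_min r hr) hη.le
    have e : ∀ a b : ℝ, η * (a + 1 / η * b) = η * a + b := fun a b => by field_simp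
    rw [e, e] at h
    have k1 := key r hr
    have k2 := key pplus hpplus
    linarith
  have heq : pplus = r := by
    have hs : ∑ i, (pplus i * Real.log (pplus i / r i) - pplus i + r i) = 0 := by
      apply le_antisymm
      · rw [Finset.sum_add_distrib, Finset.sum_sub_distrib, hpplus.2, hr.2]
        rw [KLdiv] at hle; linarith
      · exact Finset.sum_nonneg fun i _ => (gibbs_term (hpplus_pos i) (hrpos i)).1
    rw [Finset.sum_eq_zero_iff_of_nonneg
      (fun i _ => (gibbs_term (hpplus_pos i) (hrpos i)).1)] at hs
    funext i
    exact (gibbs_term (hpplus_pos i) (hrpos i)).2 (hs i (Finset.mem_univ i))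
  have k := key ps hps
  rw [heq]
  simp only [mul_sub, Finset.sum_sub_distrib]
  linarith
end
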